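/- Let d ≥ 2 and n ≥ 0 be integers. Then Σ_{j=0}^{⌊n/2⌋} √π · Γ(n−2j+d−1) · n! / ( 2^{n−2j+d−2} · Γ(d/2) · (n−2j)! · Γ(n−2j+(d−1)/2) · j! · 2^{2j} · (n−2j+(d+1)/2)_j ) = 1. -/

import Mathlib

open scoped Real BigOperators

/-- The rising factorial (Pochhammer symbol) `(x)_j = x(x+1)⋯(x+j-1)`. -/
noncomputable def poch (x : ℝ) (j : ℕ) : ℝ := ∏ i ∈ Finset.range j, (x + i)

/-!
Put `λ = (d - 1) / 2` and `m = n - 2j`. Legendre's duplication formula turns the `j`-th summand into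
`w(m, j) = n! (2λ)_m (m + λ) / (2ⁿ m! j! (λ)_{m+j+1})`, the coefficient of `xⁿ` along the
normalised Gegenbauer polynomial `P_m = C_m^λ / C_m^λ(1)`. The three-term recurrence
`x P_m = (m + 2λ) / (2(m + λ)) P_{m+1} + m / (2(m + λ)) P_{m-1}`
says that these coefficients are the law at time `n` of the birth-and-death chain on `ℕ` started
at `0` that goes up from `m` with probability `(m + 2λ) / (2(m + λ))` and down with probability
`m / (2(m + λ))`. The two probabilities add up to one, so the total mass is preserved.

The proof checks the chain's evolution equation directly on the closed form (`gw_succ_zero`,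
`gw_zero_succ`, `gw_succ_succ`), sums it (`sum_ext0_gw`), and identifies the summands with the
weights (`summand_eq`).
-/

lemma poch_succ (x : ℝ) (j : ℕ) : poch x (j + 1) = poch x j * (x + j) := by
  simp [poch, Finset.prod_range_succ]

lemma poch_add (x : ℝ) (i j : ℕ) : poch x (i + j) = poch x i * poch (x + i) j := by
  simp [poch, Finset.prod_range_add, add_assoc]

lemma poch_pos {x : ℝ} (hx : 0 < x) (j : ℕ) : 0 < poch x j :=
  Finset.prod_pos fun i _ => by positivity

lemma Gamma_nat_add {x : ℝ} (hx : 0 < x) (m : ℕ) :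
    Real.Gamma (m + x) = poch x m * Real.Gamma x := by
  induction m with
  | zero => simp [poch]
  | succ m ih =>
    have h : ((m + 1 : ℕ) : ℝ) + x = (m + x) + 1 := by push_cast; ring
    rw [h, Real.Gamma_add_one (by positivity), ih, poch_succ]
    ring

/-- The coefficient of `x ^ (m + 2j)` along the Gegenbauer polynomial of degree `m` and
parameter `l`, normalised to take the value `1` at `1`. -/
noncomputable def gw (l : ℝ) (m j : ℕ) : ℝ :=
  (Nat.factorial (m + 2 * j) : ℝ) * poch (2 * l) m * (m + l) /
    (2 ^ (m + 2 * j) * (Nat.factorial m : ℝ) * (Nat.factorial j : ℝ) * poch l (m + j + 1))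

/-- Probability that the chain goes up from `m`. -/
noncomputable def up (l : ℝ) (m : ℕ) : ℝ := (m + 2 * l) / (2 * (m + l))

/-- Probability that the chain goes down from `m`. -/
noncomputable def down (l : ℝ) (m : ℕ) : ℝ := m / (2 * (m + l))

lemma up_add_down {l : ℝ} (hl : 0 < l) (m : ℕ) : up l m + down l m = 1 := by
  have : (m : ℝ) + l ≠ 0 := by positivity
  unfold up down
  field_simp
  ring

lemma gw_succ_zero {l : ℝ} (hl : 0 < l) (m : ℕ) : gw l (m + 1) 0 = up l m * gw l m 0 := by
  have h1 : (m : ℝ) + l ≠ 0 := by positivity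
  have h2 : (m : ℝ) + 1 + l ≠ 0 := by positivity
  have h3 := (poch_pos hl m).ne'
  have h5 : l + m ≠ 0 := by positivity
  have h6 : l + (m + 1) ≠ 0 := by positivity
  simp only [gw, up, mul_zero, add_zero, poch_succ, Nat.factorial_succ, pow_succ]
  push_cast
  field_simp
  ring

lemma gw_zero_succ {l : ℝ} (hl : 0 < l) (j : ℕ) :
    gw l 0 (j + 1) = down l 1 * gw l 1 j := by
  have h3 := (poch_pos hl j).ne'
  have h1 : 1 + l ≠ 0 := by positivity
  have h5 : l + j ≠ 0 := by positivity
  have h6 : l + (j + 1) ≠ 0 := by positivity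
  have e1 : 0 + 2 * (j + 1) = 2 * j + 1 + 1 := by ring
  have e2 : 1 + 2 * j = 2 * j + 1 := by ring
  have e3 : 1 + j + 1 = j + 1 + 1 := by ring
  have e4 : 0 + (j + 1) + 1 = j + 1 + 1 := by ring
  have e5 : poch (2 * l) 1 = 2 * l := by simp [poch]
  have e6 : poch (2 * l) 0 = 1 := by simp [poch]
  simp only [gw, down, e1, e2, e3, e4, e5, e6, poch_succ, Nat.factorial_succ, pow_succ]
  push_cast
  simp only [Nat.factorial_zero]
  field_simp
  ring

lemma gw_succ_succ {l : ℝ} (hl : 0 < l) (m j : ℕ) :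
    gw l (m + 1) (j + 1) = up l m * gw l m (j + 1) + down l (m + 2) * gw l (m + 2) j := by
  have h3 := (poch_pos hl (m + j)).ne'
  have h1 : (m : ℝ) + l ≠ 0 := by positivity
  have h2 : (m : ℝ) + 2 + l ≠ 0 := by positivity
  have h4 : l + (m + j) ≠ 0 := by positivity
  have h5 : l + (m + j + 1) ≠ 0 := by positivity
  have h6 : l + (m + j + 1 + 1) ≠ 0 := by positivity
  have e1 : m + 1 + 2 * (j + 1) = m + 2 * j + 1 + 1 + 1 := by ring
  have e2 : m + 2 * (j + 1) = m + 2 * j + 1 + 1 := by ring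
  have e3 : m + 2 + 2 * j = m + 2 * j + 1 + 1 := by ring
  have e4 : m + 1 + (j + 1) + 1 = m + j + 1 + 1 + 1 := by ring
  have e5 : m + (j + 1) + 1 = m + j + 1 + 1 := by ring
  have e6 : m + 2 + j + 1 = m + j + 1 + 1 + 1 := by ring
  have e7 : poch (2 * l) (m + 2) = poch (2 * l) m * (2 * l + m) * (2 * l + (m + 1)) := by
    rw [show m + 2 = m + 1 + 1 from rfl, poch_succ, poch_succ]; push_cast; rfl
  simp only [gw, up, down, e1, e2, e3, e4, e5, e6, e7, poch_succ, Nat.factorial_succ, pow_succ]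
  push_cast
  field_simp
  ring

/-- The value `f (n - 2j) j`, extended by zero to the indices with `2j > n`. -/
noncomputable def ext0 (f : ℕ → ℕ → ℝ) (n j : ℕ) : ℝ :=
  if 2 * j ≤ n then f (n - 2 * j) j else 0

lemma ext0_gw_succ_zero {l : ℝ} (hl : 0 < l) (n : ℕ) :
    ext0 (gw l) (n + 1) 0 = ext0 (fun m j => up l m * gw l m j) n 0 := by
  simp [ext0, gw_succ_zero hl]

/-- The evolution equation of the chain from time `n` to time `n + 1`. -/
lemma ext0_gw_succ_succ {l : ℝ} (hl : 0 < l) (n j : ℕ) :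
    ext0 (gw l) (n + 1) (j + 1) = ext0 (fun m j => up l m * gw l m j) n (j + 1) +
      ext0 (fun m j => down l m * gw l m j) n j := by
  unfold ext0
  rcases lt_trichotomy (n + 1) (2 * (j + 1)) with h | h | h
  · rw [if_neg (by omega), if_neg (by omega)]
    split_ifs
    -- here `n = 2j`, and the chain cannot go down from `0`
    · have : n - 2 * j = 0 := by omega
      simp [this, down]
    · simp
  · rw [if_pos (by omega), if_neg (by omega), if_pos (by omega)]
    have e1 : n + 1 - 2 * (j + 1) = 0 := by omega
    have e2 : n - 2 * j = 1 := by omega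
    simp only [e1, e2, gw_zero_succ hl, zero_add]
  · obtain ⟨m, rfl⟩ : ∃ m, n = m + 2 * (j + 1) := ⟨n - 2 * (j + 1), by omega⟩
    rw [if_pos (by omega), if_pos (by omega), if_pos (by omega)]
    have e1 : m + 2 * (j + 1) + 1 - 2 * (j + 1) = m + 1 := by omega
    have e2 : m + 2 * (j + 1) - 2 * (j + 1) = m := by omega
    have e3 : m + 2 * (j + 1) - 2 * j = m + 2 := by omega
    simp only [e1, e2, e3, gw_succ_succ hl]

/-- The chain has total mass one at every time `n`; indices `j ≥ N` lie beyond the support. -/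
lemma sum_ext0_gw {l : ℝ} (hl : 0 < l) (n : ℕ) :
    ∀ N, n < 2 * N → ∑ j ∈ Finset.range N, ext0 (gw l) n j = 1 := by
  induction n with
  | zero =>
    intro N hN
    obtain ⟨N, rfl⟩ : ∃ k, N = k + 1 := ⟨N - 1, by omega⟩
    rw [Finset.sum_range_succ', Finset.sum_eq_zero fun j _ => by simp [ext0]]
    simp [ext0, gw, poch, hl.ne']
  | succ n ih =>
    intro N hN
    obtain ⟨N, rfl⟩ : ∃ k, N = k + 1 := ⟨N - 1, by omega⟩
    -- no mass goes down from the last index: it lies out of range or at the state `0`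
    have hlast : ext0 (fun m j => down l m * gw l m j) n N = 0 := by
      unfold ext0
      split_ifs with h
      · have : n - 2 * N = 0 := by omega
        simp [this, down]
      · rfl
    rw [← ih (N + 1) (by omega), Finset.sum_range_succ', ext0_gw_succ_zero hl,
      Finset.sum_congr rfl fun j _ => ext0_gw_succ_succ hl n j, Finset.sum_add_distrib,
      add_right_comm, ← Finset.sum_range_succ', ← add_zero (∑ j ∈ Finset.range N, _), ← hlast,
      ← Finset.sum_range_succ, ← Finset.sum_add_distrib]
    refine Finset.sum_congr rfl fun j _ => ?_
    unfold ext0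
    split_ifs
    · rw [← add_mul, up_add_down hl, one_mul]
    · simp

/-- The summand with `d = 2l + 1` and `n = m + 2j`, in terms of `gw`: the duplication formula
removes all Gamma values. -/
lemma summand_eq {l : ℝ} (hl : 0 < l) (m j : ℕ) :
    Real.sqrt π * Real.Gamma (m + 2 * l) * (Nat.factorial (m + 2 * j) : ℝ) /
        ((2 : ℝ) ^ ((m : ℝ) + (2 * l - 1)) * Real.Gamma (l + 1 / 2) *
          (Nat.factorial m : ℝ) * Real.Gamma (m + l) *
          (Nat.factorial j : ℝ) * (2 : ℝ) ^ (2 * j) * poch (m + l + 1) j) = gw l m j := by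
  have hdup := Real.Gamma_mul_Gamma_add_half l
  have hpow : (2 : ℝ) ^ (1 - 2 * l) * (2 : ℝ) ^ (2 * l - 1) = 1 := by
    rw [← Real.rpow_add two_pos]; simp
  have hsqrt : Real.sqrt π * Real.Gamma (2 * l) =
      (2 : ℝ) ^ (2 * l - 1) * Real.Gamma l * Real.Gamma (l + 1 / 2) := by
    linear_combination (-(2 : ℝ) ^ (2 * l - 1)) * hdup
      - Real.sqrt π * Real.Gamma (2 * l) * hpow
  have hp : poch l (m + j + 1) = poch l m * (m + l) * poch (m + l + 1) j := by
    rw [show m + j + 1 = (m + 1) + j by ring, poch_add, poch_succ,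
      show l + ((m + 1 : ℕ) : ℝ) = m + l + 1 by push_cast; ring]
    ring
  rw [Real.rpow_add two_pos, Real.rpow_natCast, Gamma_nat_add (by positivity : 0 < 2 * l),
    Gamma_nat_add hl, gw, hp, pow_add]
  have g1 := (Real.Gamma_pos_of_pos hl).ne'
  have g2 := (Real.Gamma_pos_of_pos (by positivity : 0 < l + 1 / 2)).ne'
  have g3 := (poch_pos hl m).ne'
  have g4 := (poch_pos (by positivity : 0 < m + l + 1) j).ne'
  have g5 : (m : ℝ) + l ≠ 0 := by positivity
  have g6 := (Real.rpow_pos_of_pos two_pos (2 * l - 1)).ne'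
  rw [div_eq_div_iff (by positivity) (by positivity)]
  linear_combination poch (2 * l) m * (Nat.factorial (m + 2 * j) : ℝ) *
    (2 ^ m * 2 ^ (2 * j) * (Nat.factorial m : ℝ) * (Nat.factorial j : ℝ) *
      (poch l m * (m + l) * poch (m + l + 1) j)) * hsqrt

theorem stmt15 (d : ℕ) (hd : 2 ≤ d) (n : ℕ) :
    ∑ j ∈ Finset.range (n / 2 + 1),
      Real.sqrt π * Real.Gamma ((n : ℝ) - 2 * j + d - 1) * (Nat.factorial n : ℝ) /
        ((2 : ℝ) ^ ((n : ℝ) - 2 * j + d - 2) * Real.Gamma ((d : ℝ) / 2) *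
          (Nat.factorial (n - 2 * j) : ℝ) * Real.Gamma ((n : ℝ) - 2 * j + ((d : ℝ) - 1) / 2) *
          (Nat.factorial j : ℝ) * (2 : ℝ) ^ (2 * j) *
          poch ((n : ℝ) - 2 * j + ((d : ℝ) + 1) / 2) j) = 1 := by
  have hd' : (2 : ℝ) ≤ d := by exact_mod_cast hd
  have hl : (0 : ℝ) < ((d : ℝ) - 1) / 2 := by linarith
  refine (Finset.sum_congr rfl fun j hj => ?_).trans (sum_ext0_gw hl n (n / 2 + 1) (by omega))
  rw [Finset.mem_range] at hj
  obtain ⟨m, rfl⟩ : ∃ m, n = m + 2 * j := ⟨n - 2 * j, by omega⟩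
  rw [ext0, if_pos (by omega), Nat.add_sub_cancel, ← summand_eq hl]
  have e : ((m + 2 * j : ℕ) : ℝ) - 2 * j = m := by push_cast; ring
  rw [e, show (m : ℝ) + d - 1 = m + 2 * (((d : ℝ) - 1) / 2) by ring,
    show (m : ℝ) + d - 2 = m + (2 * (((d : ℝ) - 1) / 2) - 1) by ring,
    show (d : ℝ) / 2 = ((d : ℝ) - 1) / 2 + 1 / 2 by ring,
    show (m : ℝ) + ((d : ℝ) + 1) / 2 = m + ((d : ℝ) - 1) / 2 + 1 by ring]
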